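/- Suppose n ≥ 2 and 1 < p < ∞. For y ∈ B let k_y^{(p)} := P_y/‖P_y‖_{h^p}. Then k_y^{(p)} → 0 weakly in h^p(B) as |y| → 1⁻; that is, for every bounded linear functional Λ on h^p(B), Λ(k_y^{(p)}) → 0 as |y| → 1⁻. -/

import Mathlib

/-!
A bounded functional that fails to tend to `0` along the kernels `k_y = P_y / ‖P_y‖` is refuted
by a gliding-sum argument, which needs neither boundary values nor the duality of `h^p`.

Suppose `|Λ(k_y)| ≥ ε > 0` for `y` arbitrarily close to the sphere. Choose `y₁, y₂, …` one after
the other and unimodular constants `cⱼ` with `cⱼ Λ(k_{yⱼ}) = |Λ(k_{yⱼ})|`. Then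
`F = ∑_{j ≤ N} cⱼ k_{yⱼ}` satisfies `Re Λ(F) ≥ N ε`. If every new point is close enough to the
sphere, in a manner depending on the points already chosen, then
`‖F‖_p^p ≤ N (2^p + 1)` (`exists_gliding_sum`). For large `N` this contradicts
`|Λ(F)| ≤ C ‖F‖_p`, as `p > 1` (`exists_nat_rpow_lt`).

The norm bound comes from the pointwise inequality
`(a + b)^p ≤ a^p + 2^p b^p + p (2M)^{p-1} b` for `0 ≤ a ≤ M`, `0 ≤ b` (`add_rpow_le_of_bdd`), where
`a` is the sum of the earlier kernels, which is bounded, and `b = k_y` is the new one: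
`k_y` has norm at most one, and its integrals over the spheres `|x| = r` tend to `0` uniformly in
`r` as `|y| → 1` (`normKernel_integral_small`). For the latter, `P_y` is bounded off a small cap
about `y/|y|`, so it suffices that `‖P_y‖_p → ∞` (`exists_hpNorm_ge`) and that small caps have
uniformly small measure (`exists_small_cap`), by Hölder-type reasoning on the cap. The blow-up of
the norm is read off from the size of `P_y` on a cap of radius `1 - |y|`, whose measure is at
least a constant times `(1 - |y|)^{n-1}` (`cap_lower`).

Harmonicity of `P_y` (`extPoisson_harmOn`) is a direct computation; it is needed to know that the
kernels and their combinations belong to `h^p`, where `Λ` is linear.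
-/

open MeasureTheory Metric Set Filter
open scoped ENNReal NNReal Topology InnerProductSpace Classical

noncomputable section

/-- Euclidean space `ℝⁿ`. -/
abbrev Eucl (n : ℕ) := EuclideanSpace ℝ (Fin n)

/-- The open unit ball `B` in `ℝⁿ`. -/
def uBall (n : ℕ) : Set (Eucl n) := Metric.ball 0 1

/-- The unit sphere `S = ∂B` in `ℝⁿ`. -/
def uSphere (n : ℕ) : Set (Eucl n) := Metric.sphere 0 1

/-- The normalized surface area measure `σ` on the unit sphere (as a measure on `ℝⁿ`
supported on `S`), normalized so that `σ(S) = 1`. -/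
def sphMeasure (n : ℕ) : Measure (Eucl n) :=
  ((Measure.hausdorffMeasure ((n : ℝ) - 1) (uSphere n))⁻¹ : ℝ≥0∞) •
    (Measure.hausdorffMeasure ((n : ℝ) - 1) : Measure (Eucl n)).restrict (uSphere n)

/-- `i`-th standard basis vector of `ℝⁿ`. -/
def basisV (n : ℕ) (i : Fin n) : Eucl n := EuclideanSpace.single i 1

/-- The Laplacian `Δf(x) = ∑ᵢ ∂²f/∂xᵢ²(x)`. -/
def lap {n : ℕ} {F : Type*} [NormedAddCommGroup F] [NormedSpace ℝ F]
    (f : Eucl n → F) (x : Eucl n) : F :=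
  ∑ i : Fin n, iteratedFDeriv ℝ 2 f x ![basisV n i, basisV n i]

/-- `f` is harmonic on `s`: twice continuously differentiable with vanishing Laplacian. -/
def HarmOn {n : ℕ} {F : Type*} [NormedAddCommGroup F] [NormedSpace ℝ F]
    (f : Eucl n → F) (s : Set (Eucl n)) : Prop :=
  ContDiffOn ℝ 2 f s ∧ ∀ x ∈ s, lap f x = 0

/-- The Jacobian matrix `Dφ(x) = (∂φ⁽ⁱ⁾/∂xⱼ)` of a map `φ : ℝⁿ → ℝⁿ`. -/
def jacMatrix {n : ℕ} (φ : Eucl n → Eucl n) (x : Eucl n) : Matrix (Fin n) (Fin n) ℝ :=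
  Matrix.of fun i j => fderiv ℝ φ x (basisV n j) i

/-- `|Dφ(x)| := |J_φ(x)|^{1/n}`, where `J_φ` is the Jacobian determinant. -/
def normDeriv {n : ℕ} (φ : Eucl n → Eucl n) (x : Eucl n) : ℝ :=
  |(jacMatrix φ x).det| ^ ((n : ℝ)⁻¹)

/-- The weighted composition operator `W_{φ,ψ} f = ψ · (f ∘ φ)`. -/
def wco {n : ℕ} (φ : Eucl n → Eucl n) (ψ : Eucl n → ℂ) (f : Eucl n → ℂ) : Eucl n → ℂ :=
  fun x => ψ x * f (φ x)

/-- The set of values `(∫_S |f(rζ)|^p dσ(ζ))^{1/p}`, `0 ≤ r < 1`. -/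
def hpNormSet (n : ℕ) (p : ℝ) (f : Eucl n → ℂ) : Set ℝ :=
  (fun r : ℝ => (∫ ζ, ‖f (r • ζ)‖ ^ p ∂(sphMeasure n)) ^ (1 / p)) '' Set.Ico (0 : ℝ) 1

/-- The set of values `|f(x)|`, `x ∈ B`. -/
def hInfSet (n : ℕ) (f : Eucl n → ℂ) : Set ℝ := (fun x => ‖f x‖) '' uBall n

/-- Membership in the harmonic Hardy space `h^p(B)`, `1 ≤ p ≤ ∞`. -/
def MemHp (n : ℕ) (p : ℝ≥0∞) (f : Eucl n → ℂ) : Prop :=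
  HarmOn f (uBall n) ∧
    if p = ⊤ then BddAbove (hInfSet n f) else BddAbove (hpNormSet n p.toReal f)

/-- The `h^p(B)` norm, `1 ≤ p ≤ ∞`. -/
def hpNorm (n : ℕ) (p : ℝ≥0∞) (f : Eucl n → ℂ) : ℝ :=
  if p = ⊤ then sSup (hInfSet n f) else sSup (hpNormSet n p.toReal f)

/-- The operator norm of a map `T` on `h^p(B)`. -/
def opNormHp (n : ℕ) (p : ℝ≥0∞) (T : (Eucl n → ℂ) → (Eucl n → ℂ)) : ℝ :=
  sInf {C : ℝ | 0 ≤ C ∧ ∀ f, MemHp n p f → hpNorm n p (T f) ≤ C * hpNorm n p f}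

/-- The one-point compactification `ℝ̂ⁿ = ℝⁿ ∪ {∞}`. -/
abbrev EuclHat (n : ℕ) := OnePoint (Eucl n)

/-- Reflection in the sphere `S(a, r)`, as a self-map of `ℝ̂ⁿ`:
`x ↦ a + r²(x−a)/|x−a|²`, with `a ↦ ∞` and `∞ ↦ a`. -/
def sphereRefl (n : ℕ) (a : Eucl n) (r : ℝ) : EuclHat n → EuclHat n :=
  OnePoint.rec (↑a)
    (fun x => if x = a then OnePoint.infty
      else ↑(a + (r ^ 2 / ‖x - a‖ ^ 2) • (x - a)))

/-- Reflection in the hyperplane `{x : x·a = t}` (`a` a unit vector), as a self-map of `ℝ̂ⁿ`: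
`x ↦ x − 2(x·a − t)a`, with `∞ ↦ ∞`. -/
def hyperRefl (n : ℕ) (a : Eucl n) (t : ℝ) : EuclHat n → EuclHat n :=
  OnePoint.rec OnePoint.infty
    (fun x => ↑(x - (2 * (⟪x, a⟫_ℝ - t)) • a))

/-- A reflection of `ℝ̂ⁿ` in a sphere or a hyperplane. -/
def IsReflection (n : ℕ) (f : EuclHat n → EuclHat n) : Prop :=
  (∃ a r, 0 < r ∧ f = sphereRefl n a r) ∨
    (∃ a t, ‖a‖ = 1 ∧ f = hyperRefl n a t)

/-- A Möbius transformation of `ℝ̂ⁿ`: a finite composition of reflections in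
spheres or hyperplanes. -/
def IsMobiusHat (n : ℕ) (g : EuclHat n → EuclHat n) : Prop :=
  ∃ L : List (EuclHat n → EuclHat n), L ≠ [] ∧ (∀ f ∈ L, IsReflection n f) ∧
    g = L.foldr (· ∘ ·) id

/-- `φ : ℝⁿ → ℝⁿ` is, on `Ω`, the restriction of a Möbius transformation of `ℝ̂ⁿ`. -/
def IsMobiusRestr (n : ℕ) (φ : Eucl n → Eucl n) (Ω : Set (Eucl n)) : Prop :=
  ∃ g : EuclHat n → EuclHat n, IsMobiusHat n g ∧ ∀ x ∈ Ω, g ↑x = ↑(φ x)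

/-- `φ ∈ Möb(B)`: `φ` agrees, on an open neighborhood of the closed unit ball, with a
Möbius transformation of `ℝ̂ⁿ`, and `φ` maps `B` bijectively onto `B`.  (Such a `φ` is
the canonical extension of the Möbius transformation to the closed unit ball.) -/
def IsMobiusBall (n : ℕ) (φ : Eucl n → Eucl n) : Prop :=
  (∃ U : Set (Eucl n), IsOpen U ∧ Metric.closedBall 0 1 ⊆ U ∧ IsMobiusRestr n φ U) ∧
    Set.BijOn φ (uBall n) (uBall n)

/-- The nontangential approach region `Γ_δ(ζ) = {x ∈ B : |x − ζ| < (δ/2)(1 − |x|²)}`. -/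
def ntRegion (n : ℕ) (δ : ℝ) (ζ : Eucl n) : Set (Eucl n) :=
  {x | x ∈ uBall n ∧ ‖x - ζ‖ < δ / 2 * (1 - ‖x‖ ^ 2)}

/-- `g` has nontangential limit `L` at `ζ ∈ S`. -/
def HasNTLimit (n : ℕ) (g : Eucl n → ℂ) (ζ : Eucl n) (L : ℂ) : Prop :=
  ∀ δ : ℝ, 1 < δ → Filter.Tendsto g (nhdsWithin ζ (ntRegion n δ ζ)) (nhds L)

/-- The Poisson kernel `P(x, ζ) = (1 − |x|²)/|x − ζ|ⁿ` for the unit ball. -/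
def poissonK (n : ℕ) (x ζ : Eucl n) : ℝ := (1 - ‖x‖ ^ 2) / ‖x - ζ‖ ^ n

/-- The extended Poisson kernel `P_y(x) = (1 − |x|²|y|²)/(1 − 2x·y + |x|²|y|²)^{n/2}`. -/
def extPoisson (n : ℕ) (y x : Eucl n) : ℝ :=
  (1 - ‖x‖ ^ 2 * ‖y‖ ^ 2) / (1 - 2 * ⟪x, y⟫_ℝ + ‖x‖ ^ 2 * ‖y‖ ^ 2) ^ ((n : ℝ) / 2)

/-- The Gauss hypergeometric function `₂F₁(a, b; c; r) = ∑ₖ (a)ₖ(b)ₖ/((c)ₖ k!) rᵏ`. -/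
def gaussHyper (a b c r : ℝ) : ℝ :=
  ∑' k : ℕ, ((ascPochhammer ℝ k).eval a * (ascPochhammer ℝ k).eval b) /
    ((ascPochhammer ℝ k).eval c * (Nat.factorial k)) * r ^ k

/-- A linear operator on (the function class) `h^p(B)`. -/
def IsLinOnHp (n : ℕ) (p : ℝ≥0∞) (T : (Eucl n → ℂ) → (Eucl n → ℂ)) : Prop :=
  (∀ f, MemHp n p f → MemHp n p (T f)) ∧
    (∀ f g, MemHp n p f → MemHp n p g → T (f + g) = T f + T g) ∧
    (∀ (c : ℂ) (f), MemHp n p f → T (c • f) = c • T f)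

/-- A compact operator on `h^p(B)`: a linear operator mapping the unit ball of `h^p(B)`
to a totally bounded set. -/
def IsCompactOnHp (n : ℕ) (p : ℝ≥0∞) (K : (Eucl n → ℂ) → (Eucl n → ℂ)) : Prop :=
  IsLinOnHp n p K ∧
    ∀ ε : ℝ, 0 < ε → ∃ G : Finset (Eucl n → ℂ),
      ∀ f, MemHp n p f → hpNorm n p f ≤ 1 → ∃ g ∈ G, hpNorm n p (K f - g) ≤ ε

/-- The essential norm of an operator `T` on `h^p(B)`: the distance, in operator norm,
from `T` to the compact operators on `h^p(B)`. -/
def essNormHp (n : ℕ) (p : ℝ≥0∞) (T : (Eucl n → ℂ) → (Eucl n → ℂ)) : ℝ :=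
  sInf {c : ℝ | ∃ K, IsCompactOnHp n p K ∧ opNormHp n p (fun f => T f - K f) = c}

/-- The duality pairing `⟨f, g⟩ = ∫_S f* g* dσ`, relative to a boundary-function
assignment `bd`. -/
def hpPairing (n : ℕ) (bd : (Eucl n → ℂ) → (Eucl n → ℂ)) (f g : Eucl n → ℂ) : ℂ :=
  ∫ ζ, bd f ζ * bd g ζ ∂(sphMeasure n)

end

/-! ### Harmonicity of the extended Poisson kernel -/

/-- The quantity `1 - 2x·y + |x|²|y|²`, whose power `n/2` is the denominator of `P_y(x)`. -/
noncomputable def poissonDen {n : ℕ} (y x : Eucl n) : ℝ := 1 - 2 * ⟪x, y⟫_ℝ + ‖x‖ ^ 2 * ‖y‖ ^ 2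

lemma poissonDen_ge {n : ℕ} {y x : Eucl n} (hy : ‖y‖ < 1) (hx : ‖x‖ ≤ 1) :
    (1 - ‖y‖) ^ 2 ≤ poissonDen y x := by
  have h1 := real_inner_le_norm x y
  have h2 : ‖x‖ * ‖y‖ ≤ 1 * ‖y‖ := by gcongr
  have h3 : (1 - ‖y‖) ^ 2 ≤ (1 - ‖x‖ * ‖y‖) ^ 2 :=
    pow_le_pow_left₀ (by linarith) (by linarith) 2
  unfold poissonDen
  nlinarith

lemma poissonDen_pos {n : ℕ} {y x : Eucl n} (hy : ‖y‖ < 1) (hx : ‖x‖ ≤ 1) :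
    0 < poissonDen y x :=
  lt_of_lt_of_le (by have : 0 < 1 - ‖y‖ := by linarith
                     positivity) (poissonDen_ge hy hx)

lemma rpow_half_nat {a : ℝ} (ha : 0 ≤ a) (n : ℕ) : (a ^ 2) ^ ((n : ℝ) / 2) = a ^ n := by
  rw [← Real.rpow_natCast a 2, ← Real.rpow_mul ha]
  have : ((2 : ℕ) : ℝ) * ((n : ℝ) / 2) = n := by push_cast; ring
  rw [this, Real.rpow_natCast]

/-- A second directional derivative can be computed along the line through the point. -/
lemma iteratedFDeriv_two_line {E F : Type*} [NormedAddCommGroup E] [NormedSpace ℝ E]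
    [NormedAddCommGroup F] [NormedSpace ℝ F] {f : E → F} {x : E} (hf : ContDiffAt ℝ 2 f x)
    (v : E) (h1 : ℝ → F) (h2 : F)
    (H1 : ∀ᶠ t in 𝓝 (0 : ℝ), HasDerivAt (fun t : ℝ => f (x + t • v)) (h1 t) t)
    (H2 : HasDerivAt h1 h2 0) : iteratedFDeriv ℝ 2 f x ![v, v] = h2 := by
  have hline : ∀ t : ℝ, HasDerivAt (fun t : ℝ => x + t • v) v t := fun t => by
    simpa using ((hasDerivAt_id t).smul_const v).const_add x
  have hcont : Tendsto (fun t : ℝ => x + t • v) (𝓝 0) (𝓝 x) := by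
    have h := (hline 0).continuousAt.tendsto
    rwa [zero_smul, add_zero] at h
  have hd : ∀ᶠ z in 𝓝 x, DifferentiableAt ℝ f z := by
    have h := hf.eventually (by decide)
    filter_upwards [h] with z hz
    exact hz.differentiableAt two_ne_zero
  have heq : h1 =ᶠ[𝓝 0] fun t : ℝ => fderiv ℝ f (x + t • v) v := by
    filter_upwards [H1, hcont.eventually hd] with t ht hdt
    exact ht.unique (hdt.hasFDerivAt.comp_hasDerivAt t (hline t))
  have hf2 : DifferentiableAt ℝ (fderiv ℝ f) x :=
    (hf.fderiv_right (m := 1) (by norm_num)).differentiableAt one_ne_zero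
  have hx0 : x = x + (0 : ℝ) • v := by rw [zero_smul, add_zero]
  have h3 : HasDerivAt (fun t : ℝ => fderiv ℝ f (x + t • v)) (fderiv ℝ (fderiv ℝ f) x v) 0 :=
    HasFDerivAt.comp_hasDerivAt_of_eq (0 : ℝ) hf2.hasFDerivAt (hline 0) hx0
  have h4 : HasDerivAt (fun t : ℝ => fderiv ℝ f (x + t • v) v)
      (fderiv ℝ (fderiv ℝ f) x v v) 0 :=
    (ContinuousLinearMap.apply ℝ F v).hasFDerivAt.comp_hasDerivAt (0 : ℝ) h3
  rw [iteratedFDeriv_two_apply]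
  exact h4.unique (H2.congr_of_eventuallyEq heq.symm)

lemma extPoisson_contDiffAt {n : ℕ} {y x : Eucl n} (hy : ‖y‖ < 1) (hx : ‖x‖ < 1) (c : ℝ) :
    ContDiffAt ℝ 2 (fun x => ((extPoisson n y x / c : ℝ) : ℂ)) x := by
  have hD : 1 - 2 * ⟪x, y⟫_ℝ + ‖x‖ ^ 2 * ‖y‖ ^ 2 ≠ 0 := (poissonDen_pos hy hx.le).ne'
  have h1 : ContDiffAt ℝ 2 (fun x : Eucl n => ‖x‖ ^ 2) x := (contDiff_norm_sq ℝ).contDiffAt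
  have h2 : ContDiffAt ℝ 2 (fun x : Eucl n => ⟪x, y⟫_ℝ) x :=
    contDiffAt_id.inner ℝ contDiffAt_const
  have h3 : ContDiffAt ℝ 2
      (fun x : Eucl n => 1 - 2 * ⟪x, y⟫_ℝ + ‖x‖ ^ 2 * ‖y‖ ^ 2) x :=
    (contDiffAt_const.sub (contDiffAt_const.mul h2)).add (h1.mul contDiffAt_const)
  have h4 : ContDiffAt ℝ 2 (fun x => extPoisson n y x / c) x := by
    unfold extPoisson
    refine ContDiffAt.div_const (ContDiffAt.div ?_ (h3.rpow_const_of_ne hD) ?_) c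
    · exact contDiffAt_const.sub (h1.mul contDiffAt_const)
    · exact (Real.rpow_pos_of_pos (poissonDen_pos hy hx.le) _).ne'
  exact Complex.ofRealCLM.contDiff.contDiffAt.comp x h4

/-- The extended Poisson kernel is harmonic in the ball. Writing `P_y = N · D^a` with
`a = -n/2`, the second derivatives along the coordinate axes are explicit, and their sum
vanishes since `∑ᵢ (|y|² xᵢ - yᵢ)² = |y|² D`. -/
lemma extPoisson_harmOn {n : ℕ} {y : Eucl n} (hy : ‖y‖ < 1) (c : ℝ) :
    HarmOn (fun x => ((extPoisson n y x / c : ℝ) : ℂ)) (uBall n) := by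
  refine ⟨fun x hx => (extPoisson_contDiffAt hy (by simpa [uBall] using hx) c).contDiffWithinAt,
    fun x hx => ?_⟩
  replace hx : ‖x‖ < 1 := by simpa [uBall] using hx
  set s := ‖y‖ ^ 2 with hs
  set a : ℝ := -((n : ℝ) / 2) with ha
  set D := poissonDen y x with hDdef
  have hD0 : 0 < D := poissonDen_pos hy hx.le
  set N : ℝ := 1 - ‖x‖ ^ 2 * s with hN
  have key : ∀ i : Fin n, iteratedFDeriv ℝ 2 (fun x => ((extPoisson n y x / c : ℝ) : ℂ)) x
      ![basisV n i, basisV n i] =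
      (((-2 * s * D ^ a + 2 * (-2 * s * x i) * (a * D ^ (a - 1) * (2 * (s * x i - y i)))
        + N * (a * D ^ (a - 1) * (2 * s)
          + a * (a - 1) * D ^ (a - 2) * (2 * (s * x i - y i)) ^ 2)) / c : ℝ) : ℂ) := by
    intro i
    have hnorm : ∀ t : ℝ, ‖x + t • basisV n i‖ ^ 2 = ‖x‖ ^ 2 + 2 * t * x i + t ^ 2 := by
      intro t
      rw [norm_add_sq_real, real_inner_smul_right, norm_smul, basisV,
        EuclideanSpace.inner_single_right]
      simp
      ring
    have hinner : ∀ t : ℝ, ⟪x + t • basisV n i, y⟫_ℝ = ⟪x, y⟫_ℝ + t * y i := by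
      intro t
      rw [inner_add_left, real_inner_smul_left, basisV, EuclideanSpace.inner_single_left]
      simp
    let Dt : ℝ → ℝ := fun t => D + t * (2 * (s * x i - y i)) + t ^ 2 * s
    let Nt : ℝ → ℝ := fun t => N - s * (2 * t * x i + t ^ 2)
    have hDt : ∀ t, HasDerivAt Dt (2 * (s * x i - y i) + 2 * t * s) t := by
      intro t
      have := (((hasDerivAt_id t).mul_const (2 * (s * x i - y i))).const_add D).add
        (((hasDerivAt_id t).pow 2).mul_const s)
      refine this.congr_deriv ?_
      simp only [id]
      ring
    have hNt : ∀ t, HasDerivAt Nt (-2 * s * x i - 2 * s * t) t := by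
      intro t
      have := ((((hasDerivAt_id t).const_mul 2).mul_const (x i)).add
        ((hasDerivAt_id t).pow 2)).const_mul s |>.const_sub N
      refine this.congr_deriv ?_
      simp only [id]
      ring
    have hDt0 : Dt 0 = D := by simp [Dt]
    have hNt0 : Nt 0 = N := by simp [Nt]
    have hpos : ∀ᶠ t in 𝓝 (0 : ℝ), 0 < Dt t :=
      (hDt 0).continuousAt.eventually_const_lt (by rw [hDt0]; exact hD0)
    have hfun : (fun t : ℝ => ((extPoisson n y (x + t • basisV n i) / c : ℝ) : ℂ))
        =ᶠ[𝓝 0] fun t => ((Nt t * Dt t ^ a / c : ℝ) : ℂ) := by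
      filter_upwards [hpos] with t ht
      have e1 : 1 - 2 * ⟪x + t • basisV n i, y⟫_ℝ + ‖x + t • basisV n i‖ ^ 2 * ‖y‖ ^ 2
          = Dt t := by
        rw [hnorm, hinner]; simp only [Dt, hDdef, poissonDen, ← hs]; ring
      have e2 : 1 - ‖x + t • basisV n i‖ ^ 2 * ‖y‖ ^ 2 = Nt t := by
        rw [hnorm]; simp only [Nt, hN, ← hs]; ring
      rw [extPoisson, e1, e2, ha, Real.rpow_neg ht.le, div_eq_mul_inv (Nt t)]
    refine iteratedFDeriv_two_line (extPoisson_contDiffAt hy hx c) _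
      (fun t => ((((-2 * s * x i - 2 * s * t) * Dt t ^ a + Nt t *
        ((2 * (s * x i - y i) + 2 * t * s) * a * Dt t ^ (a - 1))) / c : ℝ) : ℂ)) _ ?_ ?_
    · filter_upwards [hfun.eventuallyEq_nhds, hpos] with t ht htp
      refine HasDerivAt.congr_of_eventuallyEq ?_ ht
      exact (((hNt t).mul ((hDt t).rpow_const (Or.inl htp.ne'))).div_const c).ofReal_comp
    · have d0 : HasDerivAt (fun t : ℝ => -2 * s * x i - 2 * s * t) (-2 * s) 0 := by
        simpa using ((hasDerivAt_id (0 : ℝ)).const_mul (2 * s)).const_sub (-2 * s * x i)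
      have d1 : HasDerivAt (fun t : ℝ => 2 * (s * x i - y i) + 2 * t * s) (2 * s) 0 := by
        simpa using (((hasDerivAt_id (0 : ℝ)).const_mul 2).mul_const s).const_add
          (2 * (s * x i - y i))
      have hne : Dt 0 ≠ 0 := by rw [hDt0]; exact hD0.ne'
      have := (((d0.mul ((hDt 0).rpow_const (p := a) (Or.inl hne))).add ((hNt 0).mul
        ((d1.mul_const a).mul ((hDt 0).rpow_const (p := a - 1) (Or.inl hne))))).div_const
          c).ofReal_comp
      refine this.congr_deriv ?_
      simp only [Pi.mul_apply]
      rw [hDt0, hNt0, show a - 1 - 1 = a - 2 by ring]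
      congr 2
      ring
  unfold lap
  rw [Finset.sum_congr rfl fun i _ => key i, ← Complex.ofReal_sum, ← Finset.sum_div]
  have hx2 : ∑ i, x i * x i = ‖x‖ ^ 2 := by
    rw [EuclideanSpace.norm_sq_eq]; simp [sq]
  have hy2 : ∑ i, y i * y i = s := by
    rw [hs, EuclideanSpace.norm_sq_eq]; simp [sq]
  have hxy : ∑ i, x i * y i = ⟪x, y⟫_ℝ := by
    rw [PiLp.inner_apply]; simp [mul_comm]
  have hA : D ^ a = D ^ (a - 2) * D ^ 2 := by
    rw [← Real.rpow_natCast, ← Real.rpow_add hD0]; congr 1; push_cast; ring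
  have hB : D ^ (a - 1) = D ^ (a - 2) * D := by
    rw [← Real.rpow_add_one hD0.ne']; congr 1; ring
  have hsum : ∑ i, (-2 * s * D ^ a + 2 * (-2 * s * x i) * (a * D ^ (a - 1) *
      (2 * (s * x i - y i))) + N * (a * D ^ (a - 1) * (2 * s)
          + a * (a - 1) * D ^ (a - 2) * (2 * (s * x i - y i)) ^ 2)) =
      n * (-2 * s * D ^ a + N * (a * D ^ (a - 1) * (2 * s)))
      + (-8 * s * a * D ^ (a - 1)) * (s * ‖x‖ ^ 2 - ⟪x, y⟫_ℝ)
      + 4 * N * a * (a - 1) * D ^ (a - 2) * (s ^ 2 * ‖x‖ ^ 2 - 2 * s * ⟪x, y⟫_ℝ + s) := by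
    have hlin : ∀ A B C G : ℝ, ∑ i, (A + B * (x i * x i) + C * (x i * y i) + G * (y i * y i))
        = n * A + B * ‖x‖ ^ 2 + C * ⟪x, y⟫_ℝ + G * s := by
      intro A B C G
      simp only [Finset.sum_add_distrib, ← Finset.mul_sum, hx2, hxy, hy2]
      simp
    calc _ = ∑ i, ((-2 * s * D ^ a + N * (a * D ^ (a - 1) * (2 * s)))
          + (-8 * s * a * D ^ (a - 1) * s + 4 * N * a * (a - 1) * D ^ (a - 2) * s ^ 2)
            * (x i * x i)
          + (8 * s * a * D ^ (a - 1) - 8 * N * a * (a - 1) * D ^ (a - 2) * s) * (x i * y i)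
          + (4 * N * a * (a - 1) * D ^ (a - 2)) * (y i * y i)) :=
        Finset.sum_congr rfl fun i _ => by ring
      _ = _ := by rw [hlin]; ring
  rw [hsum, hA, hB]
  have hDe : D = 1 - 2 * ⟪x, y⟫_ℝ + ‖x‖ ^ 2 * s := rfl
  have hz : n * (-2 * s * (D ^ (a - 2) * D ^ 2) + N * (a * (D ^ (a - 2) * D) * (2 * s)))
      + (-8 * s * a * (D ^ (a - 2) * D)) * (s * ‖x‖ ^ 2 - ⟪x, y⟫_ℝ)
      + 4 * N * a * (a - 1) * D ^ (a - 2) * (s ^ 2 * ‖x‖ ^ 2 - 2 * s * ⟪x, y⟫_ℝ + s) = 0 := by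
    have h5 : s ^ 2 * ‖x‖ ^ 2 - 2 * s * ⟪x, y⟫_ℝ + s = s * D := by rw [hDe]; ring
    rw [h5]
    generalize D ^ (a - 2) = E
    have h6 : -2 * n * D + 2 * a * n * N - 8 * a * (s * ‖x‖ ^ 2 - ⟪x, y⟫_ℝ)
        + 4 * N * a * (a - 1) = 0 := by
      rw [hDe, hN, ha]; ring
    linear_combination (E * D * s) * h6
  rw [hz]
  simp

/-! ### Caps on the sphere -/

lemma sphMeasure_dichotomy (n : ℕ) : sphMeasure n = 0 ∨ IsProbabilityMeasure (sphMeasure n) := by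
  unfold sphMeasure
  set H := Measure.hausdorffMeasure (X := Eucl n) ((n : ℝ) - 1)
  by_cases h0 : H (uSphere n) = 0
  · left
    rw [Measure.restrict_eq_zero.2 h0, smul_zero]
  by_cases h1 : H (uSphere n) = ⊤
  · left
    rw [h1, ENNReal.inv_top, zero_smul]
  · right
    refine ⟨?_⟩
    rw [Measure.smul_apply, Measure.restrict_apply_univ, smul_eq_mul]
    exact ENNReal.inv_mul_cancel h0 h1

lemma uSphere_measurable (n : ℕ) : MeasurableSet (uSphere n) := isClosed_sphere.measurableSet

lemma sphMeasure_ae (n : ℕ) : ∀ᵐ ζ ∂(sphMeasure n), ‖ζ‖ = 1 := by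
  have h : ∀ᵐ ζ ∂((Measure.hausdorffMeasure ((n : ℝ) - 1) : Measure (Eucl n)).restrict
      (uSphere n)), ζ ∈ uSphere n := ae_restrict_mem (uSphere_measurable n)
  have h2 := Measure.ae_smul_measure h (((Measure.hausdorffMeasure ((n : ℝ) - 1)
    (uSphere n))⁻¹ : ℝ≥0∞))
  filter_upwards [h2] with ζ hζ
  simpa [uSphere] using hζ

/-- Caps of equal radius have equal measure: a reflection exchanges their centres. -/
lemma sphMeasure_ball_eq {n : ℕ} {e e' : Eucl n} (he : ‖e‖ = 1) (he' : ‖e'‖ = 1) (t : ℝ) :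
    sphMeasure n (ball e t) = sphMeasure n (ball e' t) := by
  let L : Eucl n ≃ₗᵢ[ℝ] Eucl n := (ℝ ∙ (e - e'))ᗮ.reflection
  have hL : L e = e' := Submodule.reflection_sub (he.trans he'.symm)
  have h1 : L.toIsometryEquiv '' (ball e t ∩ uSphere n) = ball e' t ∩ uSphere n := by
    rw [Set.image_inter L.toIsometryEquiv.injective]
    congr 1
    · rw [IsometryEquiv.image_ball]; congr 1
    · unfold uSphere
      rw [IsometryEquiv.image_sphere]; congr 1
      exact map_zero L
  unfold sphMeasure
  rw [Measure.smul_apply, Measure.smul_apply, Measure.restrict_apply measurableSet_ball,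
    Measure.restrict_apply measurableSet_ball, ← h1, IsometryEquiv.hausdorffMeasure_image]

/-- The measure of a cap tends to `0` with its radius, uniformly in the centre. -/
lemma exists_small_cap {n : ℕ} (hn : 2 ≤ n) [IsProbabilityMeasure (sphMeasure n)]
    {η : ℝ} (hη : 0 < η) :
    ∃ δ > 0, ∀ e : Eucl n, ‖e‖ = 1 → (sphMeasure n).real (ball e δ) ≤ η := by
  let e₀ : Eucl n := basisV n ⟨0, by omega⟩
  have he₀ : ‖e₀‖ = 1 := by simp [e₀, basisV]
  have hd : (0 : ℝ) < (n : ℝ) - 1 := by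
    have : (2 : ℝ) ≤ n := by exact_mod_cast hn
    linarith
  have hz : sphMeasure n {e₀} = 0 := by
    have := Measure.nullSingletonClass_hausdorff (Eucl n) hd
    unfold sphMeasure
    rw [Measure.smul_apply, measure_mono_null (le_refl _)
      (Measure.restrict_le_self.absolutelyContinuous (measure_singleton e₀)), smul_zero]
  have hI : (⋂ r > (0 : ℝ), ball e₀ r) = {e₀} := by
    ext x
    simp only [mem_iInter, mem_ball, mem_singleton_iff]
    refine ⟨fun h => ?_, fun h r hr => by simpa [h] using hr⟩
    exact dist_le_zero.1 (le_of_forall_gt fun r hr => h r hr)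
  have ht := tendsto_measure_biInter_gt (μ := sphMeasure n) (s := fun r => ball e₀ r) (a := 0)
    (fun r _ => measurableSet_ball.nullMeasurableSet) (fun i j _ hij => ball_subset_ball hij)
    ⟨1, one_pos, measure_ne_top _ _⟩
  rw [hI, hz] at ht
  have h1 := (ht.eventually (ge_mem_nhds (ENNReal.ofReal_pos.2 hη))).and self_mem_nhdsWithin
  obtain ⟨δ, hδ, hδ0⟩ := h1.exists
  refine ⟨δ, hδ0, fun e he => ?_⟩
  rw [Measure.real, sphMeasure_ball_eq he he₀]
  exact ENNReal.toReal_le_of_le_ofReal hη.le hδ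

lemma shell_pow_le (n : ℕ) {u : ℝ} (h0 : 0 ≤ u) (h1 : u ≤ 1) :
    (1 + u) ^ n - (1 - u) ^ n ≤ (3 ^ n + n) * u := by
  have h2 : 1 + n * (-u) ≤ (1 + -u) ^ n := one_add_mul_le_pow (by linarith) n
  have h3 : (1 + u) ^ n ≤ 1 + 3 ^ n * u := by
    clear h2
    induction n with
    | zero => simp [h0]
    | succ k ih =>
      have : (1 : ℝ) ≤ 3 ^ k := one_le_pow₀ (by norm_num)
      rw [pow_succ, pow_succ]
      have h5 : (1 + u) ^ k * (1 + u) ≤ (1 + 3 ^ k * u) * (1 + u) := by gcongr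
      have h6 : u * u ≤ 1 * u := by gcongr
      nlinarith
  rw [← sub_eq_add_neg] at h2
  linarith

/-- Caps of radius `2u` have measure at least a constant times `u ^ (n-1)`. By Tonelli,
`∫ σ(B(x,u)) dx = ∫ vol(B(ζ,u)) dσ(ζ)` is the volume of a ball of radius `u`, while the
integrand on the left vanishes off the shell `1 - u < |x| < 1 + u`, whose volume is `O(u)`, and
is there at most the measure of a cap of radius `2u`. -/
lemma cap_lower {n : ℕ} [IsProbabilityMeasure (sphMeasure n)] {u : ℝ} (h0 : 0 < u)
    (h1 : u < 1) {e : Eucl n} (he : ‖e‖ = 1) :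
    u ^ n ≤ (sphMeasure n).real (ball e (2 * u)) * ((3 ^ n + n) * u) := by
  have : Nontrivial (Eucl n) := ⟨e, 0, fun h => by simp [h] at he⟩
  set m := sphMeasure n (ball e (2 * u)) with hm
  set ω := (volume : Measure (Eucl n)) (ball 0 1) with hω
  have hω0 : ω ≠ 0 := (measure_ball_pos _ _ one_pos).ne'
  have hωt : ω ≠ ⊤ := measure_ball_lt_top.ne
  have hvol : ∀ (x : Eucl n) {r : ℝ}, 0 ≤ r →
      (volume : Measure (Eucl n)) (ball x r) = ENNReal.ofReal (r ^ n) * ω := fun x r hr => by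
    rw [Measure.addHaar_ball volume x hr]; simp [hω]
  let f : Eucl n → Eucl n → ℝ≥0∞ := fun x ζ => (ball (0 : ℝ) u).indicator 1 (dist ζ x)
  have hf1 : ∀ x, ∫⁻ ζ, f x ζ ∂(sphMeasure n) = sphMeasure n (ball x u) := by
    intro x
    rw [← lintegral_indicator_one measurableSet_ball]
    congr 1
    ext ζ
    simp [f, indicator, abs_of_nonneg]
  have hf2 : ∀ ζ, ∫⁻ x, f x ζ = ENNReal.ofReal (u ^ n) * ω := by
    intro ζ
    rw [← hvol ζ h0.le, ← lintegral_indicator_one measurableSet_ball]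
    congr 1
    ext x
    simp [f, indicator, abs_of_nonneg, dist_comm]
  have hmeas : Measurable (Function.uncurry f) := by
    refine (measurable_one.indicator measurableSet_ball).comp ?_
    exact (continuous_snd.dist continuous_fst).measurable
  have hswap := lintegral_lintegral_swap (μ := (volume : Measure (Eucl n)))
    (ν := sphMeasure n) hmeas.aemeasurable
  simp only [hf1, hf2, lintegral_const, measure_univ, mul_one] at hswap
  let A : Set (Eucl n) := ball 0 (1 + u) \ ball 0 (1 - u)
  have hAm : MeasurableSet A := measurableSet_ball.diff measurableSet_ball
  have hA : volume A = ENNReal.ofReal ((1 + u) ^ n - (1 - u) ^ n) * ω := by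
    rw [measure_sdiff (ball_subset_ball (by linarith)) measurableSet_ball.nullMeasurableSet
      measure_ball_lt_top.ne, hvol _ (by linarith), hvol _ (by linarith),
      ENNReal.ofReal_sub _ (pow_nonneg (by linarith) n), ENNReal.sub_mul fun _ _ => hωt]
  have hle : ∀ x : Eucl n, sphMeasure n (ball x u) ≤ A.indicator (fun _ => m) x := by
    intro x
    by_cases hx : x ∈ A
    · rw [indicator_of_mem hx]
      simp only [A, Set.mem_sdiff, mem_ball, dist_zero_right, not_lt] at hx
      have hxpos : 0 < ‖x‖ := by linarith
      have hnx : ‖(‖x‖⁻¹ • x)‖ = 1 := by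
        rw [norm_smul, norm_inv, norm_norm, inv_mul_cancel₀ hxpos.ne']
      rw [hm, sphMeasure_ball_eq he hnx]
      refine measure_mono (ball_subset_ball' ?_)
      have : dist x (‖x‖⁻¹ • x) = |‖x‖ - 1| := by
        have e1 : x - ‖x‖⁻¹ • x = ((‖x‖ - 1) * ‖x‖⁻¹) • x := by
          rw [sub_mul, mul_inv_cancel₀ hxpos.ne', sub_smul, one_smul, one_mul]
        rw [dist_eq_norm, e1, norm_smul, norm_mul, norm_inv, norm_norm, mul_assoc,
          inv_mul_cancel₀ hxpos.ne', mul_one, Real.norm_eq_abs]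
      rw [this]
      have : |‖x‖ - 1| ≤ u := abs_le.2 ⟨by linarith, by linarith⟩
      linarith
    · rw [indicator_of_notMem hx, nonpos_iff_eq_zero, ← compl_compl (ball x u)]
      have : ∀ᵐ ζ ∂(sphMeasure n), ζ ∈ (ball x u)ᶜ := by
        filter_upwards [sphMeasure_ae n] with ζ hζ hζx
        apply hx
        rw [mem_ball, dist_eq_norm] at hζx
        have a1 := abs_norm_sub_norm_le ζ x
        have a2 := abs_lt.1 (a1.trans_lt hζx)
        simp only [A, Set.mem_sdiff, mem_ball, dist_zero_right, not_lt]
        constructor <;> linarith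
      exact this
  have hfin : ENNReal.ofReal (u ^ n) * ω ≤
      m * (ENNReal.ofReal ((1 + u) ^ n - (1 - u) ^ n) * ω) := by
    rw [← hswap, ← hA, ← setLIntegral_const, ← lintegral_indicator hAm]
    exact lintegral_mono hle
  rw [← mul_assoc, ENNReal.mul_le_mul_iff_left hω0 hωt] at hfin
  have hmt : m ≠ ⊤ := measure_ne_top _ _
  have h3 := ENNReal.toReal_mono (by finiteness) hfin
  have hp : (1 - u) ^ n ≤ (1 + u) ^ n := pow_le_pow_left₀ (by linarith) (by linarith) n
  rw [ENNReal.toReal_mul, ENNReal.toReal_ofReal (by positivity),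
    ENNReal.toReal_ofReal (by linarith)] at h3
  refine h3.trans ?_
  exact mul_le_mul_of_nonneg_left (shell_pow_le n h0.le h1.le) ENNReal.toReal_nonneg

/-! ### Size of the extended Poisson kernel -/

lemma extPoisson_nonneg {n : ℕ} {y x : Eucl n} (hy : ‖y‖ < 1) (hx : ‖x‖ ≤ 1) :
    0 ≤ extPoisson n y x := by
  refine div_nonneg ?_ (Real.rpow_nonneg (poissonDen_pos hy hx).le _)
  have : ‖x‖ ^ 2 * ‖y‖ ^ 2 ≤ 1 * 1 := by
    gcongr
    · exact pow_le_one₀ (norm_nonneg _) hx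
    · exact pow_le_one₀ (norm_nonneg _) hy.le
  linarith

lemma extPoisson_le {n : ℕ} {y x : Eucl n} (hy : ‖y‖ < 1) (hx : ‖x‖ ≤ 1) :
    extPoisson n y x ≤ 1 / (1 - ‖y‖) ^ n := by
  have hy' : 0 < 1 - ‖y‖ := by linarith
  refine div_le_div₀ zero_le_one ?_ (by positivity) ?_
  · have : 0 ≤ ‖x‖ ^ 2 * ‖y‖ ^ 2 := by positivity
    linarith
  · rw [← rpow_half_nat hy'.le]
    exact Real.rpow_le_rpow (by positivity) (poissonDen_ge hy hx) (by positivity)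

/-- On spheres about the origin, the extended Poisson kernel is the classical one at `r y`. -/
lemma extPoisson_smul {n : ℕ} {y ζ : Eucl n} (hζ : ‖ζ‖ = 1) (r : ℝ) :
    extPoisson n y (r • ζ) = (1 - r ^ 2 * ‖y‖ ^ 2) / ‖ζ - r • y‖ ^ n := by
  have h1 : ‖r • ζ‖ ^ 2 = r ^ 2 := by rw [norm_smul, hζ, mul_one, Real.norm_eq_abs, sq_abs]
  have h2 : 1 - 2 * ⟪r • ζ, y⟫_ℝ + r ^ 2 * ‖y‖ ^ 2 = ‖ζ - r • y‖ ^ 2 := by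
    rw [norm_sub_sq_real, hζ, norm_smul, mul_pow, Real.norm_eq_abs, sq_abs,
      real_inner_smul_left, real_inner_smul_right]
    ring
  rw [extPoisson, h1, h2, rpow_half_nat (norm_nonneg _)]

lemma measurable_extPoisson {n : ℕ} (y : Eucl n) : Measurable (extPoisson n y) := by
  unfold extPoisson
  refine Measurable.div ?_ (Measurable.pow_const ?_ _)
  · exact (by fun_prop : Continuous fun x : Eucl n => 1 - ‖x‖ ^ 2 * ‖y‖ ^ 2).measurable
  · exact (by fun_prop : Continuous fun x : Eucl n =>
      1 - 2 * ⟪x, y⟫_ℝ + ‖x‖ ^ 2 * ‖y‖ ^ 2).measurable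

lemma norm_inv_smul_self {n : ℕ} {y : Eucl n} (hy : 0 < ‖y‖) : ‖(‖y‖⁻¹ • y)‖ = 1 := by
  rw [norm_smul, norm_inv, norm_norm, inv_mul_cancel₀ hy.ne']

lemma norm_inv_smul_sub {n : ℕ} {y : Eucl n} (hy : 0 < ‖y‖) (r : ℝ) :
    ‖(‖y‖⁻¹ • y - r • y)‖ = |1 - r * ‖y‖| := by
  have : ‖y‖⁻¹ • y - r • y = (1 - r * ‖y‖) • (‖y‖⁻¹ • y) := by
    rw [smul_smul, sub_mul, mul_assoc, mul_inv_cancel₀ hy.ne', sub_smul]; simp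
  rw [this, norm_smul, norm_inv_smul_self hy, mul_one, Real.norm_eq_abs]

/-- Away from a cap about `y/|y|` the kernel is bounded independently of `y` and `r`. -/
lemma extPoisson_off_cap {n : ℕ} {y ζ : Eucl n} (hy0 : 0 < ‖y‖) (hy : ‖y‖ < 1) (hζ : ‖ζ‖ = 1)
    {r δ : ℝ} (hr : r ∈ Ico (0 : ℝ) 1) (hδ : 0 < δ) (hc : ζ ∉ ball (‖y‖⁻¹ • y) δ) :
    extPoisson n y (r • ζ) ≤ (2 / δ) ^ n := by
  rw [extPoisson_smul hζ]
  rw [mem_ball, dist_eq_norm, not_lt] at hc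
  have h1 : ‖ζ - ‖y‖⁻¹ • y‖ ≤ ‖ζ - r • y‖ + ‖(‖y‖⁻¹ • y - r • y)‖ := by
    have := norm_sub_le (ζ - r • y) (‖y‖⁻¹ • y - r • y)
    simpa using this
  have hry : r * ‖y‖ < 1 := by nlinarith [hr.1, hr.2]
  rw [norm_inv_smul_sub hy0, abs_of_pos (by linarith)] at h1
  have h2 : 1 - r * ‖y‖ ≤ ‖ζ - r • y‖ := by
    have := norm_sub_norm_le ζ (r • y)
    rwa [hζ, norm_smul, Real.norm_eq_abs, abs_of_nonneg hr.1] at this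
  have h3 : δ / 2 ≤ ‖ζ - r • y‖ := by linarith
  have h4 : (2 / δ) ^ n = 1 / (δ / 2) ^ n := by rw [← one_div_pow]; congr 1; field_simp
  rw [h4]
  refine div_le_div₀ zero_le_one ?_ (by positivity) (by gcongr)
  have : 0 ≤ r ^ 2 * ‖y‖ ^ 2 := by positivity
  linarith

/-! ### The `h^p` norm of bounded functions -/

lemma norm_smul_lt_one {n : ℕ} {ζ : Eucl n} (hζ : ‖ζ‖ = 1) {r : ℝ} (hr : r ∈ Ico (0 : ℝ) 1) :
    ‖r • ζ‖ < 1 := by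
  rw [norm_smul, hζ, mul_one, Real.norm_eq_abs, abs_of_nonneg hr.1]; exact hr.2

lemma integrable_of_bdd {n : ℕ} [IsProbabilityMeasure (sphMeasure n)] {g : Eucl n → ℝ}
    (hg : Measurable g) {M : ℝ} (hM : ∀ x, ‖x‖ < 1 → |g x| ≤ M) {r : ℝ}
    (hr : r ∈ Ico (0 : ℝ) 1) : Integrable (fun ζ => g (r • ζ)) (sphMeasure n) := by
  refine Integrable.of_bound (C := M) ?_ ?_
  · exact (hg.comp (measurable_const_smul r)).aestronglyMeasurable
  · filter_upwards [sphMeasure_ae n] with ζ hζ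
    exact hM _ (norm_smul_lt_one hζ hr)

lemma integral_norm_rpow_le {n : ℕ} [IsProbabilityMeasure (sphMeasure n)] {f : Eucl n → ℂ}
    {g : Eucl n → ℝ} (hg : Measurable g) {M q : ℝ} (hM : ∀ x, ‖x‖ < 1 → g x ≤ M)
    (hfg : ∀ x, ‖x‖ < 1 → ‖f x‖ ≤ g x) (hq : 0 < q) {r : ℝ} (hr : r ∈ Ico (0 : ℝ) 1) :
    ∫ ζ, ‖f (r • ζ)‖ ^ q ∂(sphMeasure n) ≤ ∫ ζ, g (r • ζ) ^ q ∂(sphMeasure n) := by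
  refine integral_mono_of_nonneg (ae_of_all _ fun ζ => by positivity)
    (integrable_of_bdd (g := fun x => g x ^ q) (hg.pow_const q) (M := M ^ q) ?_ hr) ?_
  · intro x hx
    have h0 := (norm_nonneg _).trans (hfg x hx)
    rw [abs_of_nonneg (Real.rpow_nonneg h0 _)]
    exact Real.rpow_le_rpow h0 (hM x hx) hq.le
  · filter_upwards [sphMeasure_ae n] with ζ hζ
    exact Real.rpow_le_rpow (norm_nonneg _) (hfg _ (norm_smul_lt_one hζ hr)) hq.le

lemma hpNormSet_bddAbove {n : ℕ} [IsProbabilityMeasure (sphMeasure n)] {f : Eucl n → ℂ}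
    {M q : ℝ} (hM : ∀ x, ‖x‖ < 1 → ‖f x‖ ≤ M) (hq : 0 < q) :
    BddAbove (hpNormSet n q f) := by
  refine ⟨(M ^ q) ^ (1 / q), ?_⟩
  rintro _ ⟨r, hr, rfl⟩
  refine Real.rpow_le_rpow (integral_nonneg fun ζ => by positivity) ?_ (by positivity)
  simpa using integral_norm_rpow_le (g := fun _ => M) measurable_const (fun _ _ => le_rfl) hM hq hr

lemma integral_le_hpNorm_rpow {n : ℕ} [IsProbabilityMeasure (sphMeasure n)] {f : Eucl n → ℂ}
    {p : ℝ≥0∞} (hp1 : 1 < p) (hp2 : p ≠ ⊤)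
    {M : ℝ} (hM : ∀ x, ‖x‖ < 1 → ‖f x‖ ≤ M) {r : ℝ} (hr : r ∈ Ico (0 : ℝ) 1) :
    0 ≤ hpNorm n p f ∧
      ∫ ζ, ‖f (r • ζ)‖ ^ p.toReal ∂(sphMeasure n) ≤ hpNorm n p f ^ p.toReal := by
  have hq : 0 < p.toReal := ENNReal.toReal_pos (zero_lt_one.trans hp1).ne' hp2
  have h0 : 0 ≤ ∫ ζ, ‖f (r • ζ)‖ ^ p.toReal ∂(sphMeasure n) :=
    integral_nonneg fun ζ => by positivity
  have h1 : (∫ ζ, ‖f (r • ζ)‖ ^ p.toReal ∂(sphMeasure n)) ^ (1 / p.toReal) ≤ hpNorm n p f := by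
    rw [hpNorm, if_neg hp2]
    exact le_csSup (hpNormSet_bddAbove hM hq) ⟨r, hr, rfl⟩
  refine ⟨(Real.rpow_nonneg h0 _).trans h1, ?_⟩
  have h2 := Real.rpow_le_rpow (Real.rpow_nonneg h0 _) h1 hq.le
  rwa [← Real.rpow_mul h0, one_div_mul_cancel hq.ne', Real.rpow_one] at h2

lemma hpNorm_le {n : ℕ} {f : Eucl n → ℂ} {p : ℝ≥0∞} (hp2 : p ≠ ⊤) {A : ℝ}
    (h : ∀ r ∈ Ico (0 : ℝ) 1, ∫ ζ, ‖f (r • ζ)‖ ^ p.toReal ∂(sphMeasure n) ≤ A) :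
    hpNorm n p f ≤ A ^ (1 / p.toReal) := by
  rw [hpNorm, if_neg hp2]
  refine csSup_le ⟨_, 0, by simp, rfl⟩ ?_
  rintro _ ⟨r, hr, rfl⟩
  exact Real.rpow_le_rpow (integral_nonneg fun ζ => by positivity) (h r hr) (by positivity)

/-! ### The normalized kernels -/

/-- The real-valued normalized kernel `P_y / ‖P_y‖_{h^p}`. -/
noncomputable def normKernel (n : ℕ) (p : ℝ≥0∞) (y x : Eucl n) : ℝ :=
  extPoisson n y x / hpNorm n p (fun z => (↑(extPoisson n y z) : ℂ))

lemma norm_extPoisson_le {n : ℕ} {y : Eucl n} (hy : ‖y‖ < 1) (x : Eucl n) (hx : ‖x‖ < 1) :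
    ‖((extPoisson n y x : ℝ) : ℂ)‖ ≤ 1 / (1 - ‖y‖) ^ n := by
  rw [Complex.norm_real, Real.norm_eq_abs, abs_of_nonneg (extPoisson_nonneg hy hx.le)]
  exact extPoisson_le hy hx.le

/-- Near `y/|y|`, on a cap of radius comparable to `1-|y|`, the kernel is at least a constant
times `(1-|y|)^{1-n}`; since `p > 1`, this forces `‖P_y‖_{h^p}` to blow up. -/
lemma hpNorm_lower {n : ℕ} (hn : 2 ≤ n) [IsProbabilityMeasure (sphMeasure n)]
    {p : ℝ≥0∞} (hp1 : 1 < p) (hp2 : p ≠ ⊤) {y : Eucl n} (hy0 : 0 < ‖y‖) (hy : ‖y‖ < 1) :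
    (2 / 6 ^ n) ^ p.toReal / (3 ^ n + n) * (((1 - ‖y‖) / 2)⁻¹) ^ (p.toReal - 1) ≤
      hpNorm n p (fun z => (↑(extPoisson n y z) : ℂ)) ^ p.toReal := by
  set q := p.toReal with hqdef
  have hq1 : 1 < q := by
    rw [hqdef, ← ENNReal.toReal_one]; exact (ENNReal.toReal_lt_toReal (by simp) hp2).2 hp1
  have hq : 0 < q := by linarith
  obtain ⟨k, hnk⟩ : ∃ k, n = k + 1 := ⟨n - 1, by omega⟩
  set u := (1 - ‖y‖) / 2 with hu
  have hu0 : 0 < u := by rw [hu]; linarith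
  have hu1 : u < 1 := by rw [hu]; linarith
  set e : Eucl n := ‖y‖⁻¹ • y with he
  have hcap := cap_lower hu0 hu1 (norm_inv_smul_self hy0)
  have hr : ‖y‖ ∈ Ico (0 : ℝ) 1 := ⟨hy0.le, hy⟩
  refine le_trans ?_ (integral_le_hpNorm_rpow hp1 hp2 (norm_extPoisson_le hy) hr).2
  have hyu : ‖y‖ = 1 - 2 * u := by rw [hu]; ring
  set b : ℝ := 2 / 6 ^ n * (u ^ k)⁻¹ with hb
  have hb0 : 0 < b := by positivity
  have hlow : ∫ ζ, (ball e (2 * u)).indicator (fun _ => b ^ q) ζ ∂(sphMeasure n) ≤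
      ∫ ζ, ‖((extPoisson n y (‖y‖ • ζ) : ℝ) : ℂ)‖ ^ q ∂(sphMeasure n) := by
    refine integral_mono_ae ((integrable_const _).indicator measurableSet_ball)
      (integrable_of_bdd (g := fun x => ‖((extPoisson n y x : ℝ) : ℂ)‖ ^ q)
        (M := (1 / (1 - ‖y‖) ^ n) ^ q)
        ((Complex.measurable_ofReal.comp (measurable_extPoisson y)).norm.pow_const q) ?_ hr) ?_
    · intro x hx
      rw [abs_of_nonneg (by positivity)]
      exact Real.rpow_le_rpow (norm_nonneg _) (norm_extPoisson_le hy x hx) hq.le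
    · filter_upwards [sphMeasure_ae n] with ζ hζ
      by_cases hζe : ζ ∈ ball e (2 * u)
      · rw [indicator_of_mem hζe]
        refine Real.rpow_le_rpow hb0.le ?_ hq.le
        rw [Complex.norm_real]
        refine le_trans ?_ (le_abs_self _)
        rw [extPoisson_smul hζ]
        rw [mem_ball, dist_eq_norm] at hζe
        have h1 : ‖ζ - ‖y‖ • y‖ ≤ 6 * u := by
          have h2 : ‖ζ - ‖y‖ • y‖ ≤ ‖ζ - e‖ + ‖e - ‖y‖ • y‖ := by
            simpa using norm_add_le (ζ - e) (e - ‖y‖ • y)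
          rw [he, norm_inv_smul_sub hy0, abs_of_pos (by nlinarith)] at h2
          nlinarith
        have h0 : 0 < ‖ζ - ‖y‖ • y‖ := by
          have := norm_sub_norm_le ζ (‖y‖ • y)
          rw [hζ, norm_smul, norm_norm] at this
          nlinarith
        have hbe : b = 2 * u / (6 * u) ^ n := by
          rw [hb, hnk, mul_pow, pow_succ u]; field_simp
        rw [hbe]
        refine div_le_div₀ ?_ ?_ (by positivity) (by gcongr)
        · have : ‖y‖ ^ 2 * ‖y‖ ^ 2 ≤ 1 * 1 := by
            gcongr <;> exact pow_le_one₀ (norm_nonneg _) hy.le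
          linarith
        · have h5 : ‖y‖ ^ 2 ≤ ‖y‖ := by nlinarith
          have h6 : ‖y‖ ^ 2 * ‖y‖ ^ 2 ≤ ‖y‖ * 1 := by
            gcongr
            exact pow_le_one₀ (norm_nonneg _) hy.le
          linarith
      · rw [indicator_of_notMem hζe]; positivity
  refine le_trans ?_ hlow
  rw [integral_indicator_const _ measurableSet_ball, smul_eq_mul]
  set C : ℝ := 3 ^ n + n with hC
  have hC0 : 0 < C := by positivity
  have hcap2 : u ^ k / C ≤ (sphMeasure n).real (ball e (2 * u)) := by
    rw [div_le_iff₀ hC0]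
    refine le_of_mul_le_mul_right ?_ hu0
    rw [← pow_succ, ← hnk]
    linarith
  refine le_trans ?_ (mul_le_mul_of_nonneg_right hcap2 (by positivity))
  set w := (u ^ k)⁻¹ with hw
  have hw0 : 0 < w := by positivity
  have huw : u⁻¹ ≤ w := by
    rw [hw]
    refine inv_anti₀ (by positivity) ?_
    calc u ^ k ≤ u ^ 1 := pow_le_pow_of_le_one hu0.le hu1.le (by omega)
      _ = u := pow_one u
  have huk : u ^ k = w⁻¹ := by rw [hw, inv_inv]
  calc (2 / 6 ^ n) ^ q / C * u⁻¹ ^ (q - 1) ≤ (2 / 6 ^ n) ^ q / C * w ^ (q - 1) := by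
        gcongr
    _ = u ^ k / C * b ^ q := by
        rw [huk, hb, Real.mul_rpow (by positivity) hw0.le, Real.rpow_sub_one hw0.ne']
        ring

lemma exists_hpNorm_ge {n : ℕ} (hn : 2 ≤ n) [IsProbabilityMeasure (sphMeasure n)]
    {p : ℝ≥0∞} (hp1 : 1 < p) (hp2 : p ≠ ⊤) (R : ℝ) :
    ∃ ρ : ℝ, 0 < ρ ∧ ρ < 1 ∧ ∀ y : Eucl n, ρ < ‖y‖ → ‖y‖ < 1 →
      R ≤ hpNorm n p (fun z => (↑(extPoisson n y z) : ℂ)) := by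
  set q := p.toReal with hqdef
  have hq1 : 1 < q := by
    rw [hqdef, ← ENNReal.toReal_one]; exact (ENNReal.toReal_lt_toReal (by simp) hp2).2 hp1
  have hq : 0 < q := by linarith
  have hc : 0 < ((2 : ℝ) / 6 ^ n) ^ q / (3 ^ n + n) := by positivity
  have ht := ((tendsto_rpow_atTop (by linarith : 0 < q - 1)).const_mul_atTop hc).eventually_ge_atTop
    (|R| ^ q)
  obtain ⟨v, hv⟩ := ht.exists_forall_of_atTop
  set v' := max v 4 with hv'
  have hv4 : 4 ≤ v' := le_max_right _ _
  refine ⟨1 - 2 / v', ?_, ?_, fun y hy1 hy2 => ?_⟩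
  · have : 2 / v' ≤ 2 / 4 := by gcongr
    linarith
  · have : 0 < 2 / v' := by positivity
    linarith
  · have h2v : 2 / v' ≤ 2 / 4 := by gcongr
    have hy0 : 0 < ‖y‖ := by linarith
    have hlow := hpNorm_lower hn hp1 hp2 hy0 hy2
    have hvv : v' ≤ ((1 - ‖y‖) / 2)⁻¹ := by
      rw [le_inv_comm₀ (by linarith) (by linarith)]
      have : 2 / v' = 2 * v'⁻¹ := div_eq_mul_inv _ _
      linarith
    have h1 := (hv _ ((le_max_left _ _).trans hvv)).trans hlow
    have h0 := (integral_le_hpNorm_rpow hp1 hp2 (norm_extPoisson_le hy2)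
      (r := 0) (by simp)).1
    exact (le_abs_self R).trans ((Real.rpow_le_rpow_iff (abs_nonneg R) h0 hq).1 h1)

/-- The basic estimates for a normalized kernel, valid as soon as `‖P_y‖_{h^p} > 0`. -/
lemma normKernel_props {n : ℕ} [IsProbabilityMeasure (sphMeasure n)]
    {p : ℝ≥0∞} (hp1 : 1 < p) (hp2 : p ≠ ⊤) {y : Eucl n} (hy : ‖y‖ < 1)
    (hN : 0 < hpNorm n p (fun z => (↑(extPoisson n y z) : ℂ))) :
    Measurable (normKernel n p y) ∧ (∀ x, ‖x‖ < 1 → 0 ≤ normKernel n p y x) ∧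
    (∃ M, ∀ x, ‖x‖ < 1 → normKernel n p y x ≤ M) ∧
    ∀ r ∈ Ico (0 : ℝ) 1, ∫ ζ, normKernel n p y (r • ζ) ^ p.toReal ∂(sphMeasure n) ≤ 1 := by
  refine ⟨(measurable_extPoisson y).div_const _, fun x hx =>
    div_nonneg (extPoisson_nonneg hy hx.le) hN.le, ⟨_, fun x hx =>
    div_le_div_of_nonneg_right (extPoisson_le hy hx.le) hN.le⟩, fun r hr => ?_⟩
  have h := (integral_le_hpNorm_rpow hp1 hp2 (norm_extPoisson_le hy) hr).2
  set A := hpNorm n p (fun z => (↑(extPoisson n y z) : ℂ)) with hA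
  have h2 : ∫ ζ, normKernel n p y (r • ζ) ^ p.toReal ∂(sphMeasure n) =
      ∫ ζ, ‖((extPoisson n y (r • ζ) : ℝ) : ℂ)‖ ^ p.toReal / A ^ p.toReal ∂(sphMeasure n) := by
    refine integral_congr_ae ?_
    filter_upwards [sphMeasure_ae n] with ζ hζ
    have h3 := extPoisson_nonneg hy (norm_smul_lt_one hζ hr).le
    rw [normKernel, Complex.norm_real, Real.norm_eq_abs, abs_of_nonneg h3,
      Real.div_rpow h3 hN.le]
  rw [h2, integral_div]
  exact (div_le_one (Real.rpow_pos_of_pos hN _)).2 h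

/-- The normalized kernels tend to `0` in `h¹`. Off a small cap they are at most
`(2/δ)^n / ‖P_y‖`; on the cap, `t ≤ T + T^{1-p} t^p` with `T` large bounds the integral by
`T σ(cap) + T^{1-p}`. -/
lemma normKernel_integral_small {n : ℕ} (hn : 2 ≤ n) [IsProbabilityMeasure (sphMeasure n)]
    {p : ℝ≥0∞} (hp1 : 1 < p) (hp2 : p ≠ ⊤) {η : ℝ} (hη : 0 < η) :
    ∃ ρ : ℝ, 0 < ρ ∧ ρ < 1 ∧ ∀ y : Eucl n, ρ < ‖y‖ → ‖y‖ < 1 →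
      0 < hpNorm n p (fun z => (↑(extPoisson n y z) : ℂ)) ∧
      ∀ r ∈ Ico (0 : ℝ) 1, ∫ ζ, normKernel n p y (r • ζ) ∂(sphMeasure n) ≤ η := by
  set q := p.toReal with hqdef
  have hq1 : 1 < q := by
    rw [hqdef, ← ENNReal.toReal_one]; exact (ENNReal.toReal_lt_toReal (by simp) hp2).2 hp1
  have hη3 : 0 < η / 3 := by positivity
  have hT := (tendsto_rpow_neg_atTop (by linarith : 0 < q - 1)).eventually (ge_mem_nhds hη3)
  obtain ⟨T, hT1, hT0⟩ := (hT.and (eventually_gt_atTop 0)).exists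
  obtain ⟨δ, hδ, hcap⟩ := exists_small_cap hn (div_pos hη3 hT0)
  set c : ℝ := (2 / δ) ^ n with hc
  have hc0 : 0 < c := by positivity
  obtain ⟨ρ, hρ0, hρ1, hρ⟩ := exists_hpNorm_ge hn hp1 hp2 (c / (η / 3))
  refine ⟨ρ, hρ0, hρ1, fun y hy1 hy2 => ?_⟩
  have hy0 : 0 < ‖y‖ := hρ0.trans hy1
  have hA := hρ y hy1 hy2
  have hN : 0 < hpNorm n p (fun z => (↑(extPoisson n y z) : ℂ)) :=
    lt_of_lt_of_le (by positivity) hA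
  refine ⟨hN, fun r hr => ?_⟩
  obtain ⟨hm, h0, ⟨M, hM⟩, hint⟩ := normKernel_props hp1 hp2 hy2 hN
  set A := hpNorm n p (fun z => (↑(extPoisson n y z) : ℂ)) with hAdef
  have hcA : c / A ≤ η / 3 := by
    rw [div_le_iff₀ hN]
    rw [div_le_iff₀ hη3] at hA
    linarith
  set e : Eucl n := ‖y‖⁻¹ • y with he
  have hi1 : Integrable (fun ζ => normKernel n p y (r • ζ)) (sphMeasure n) :=
    integrable_of_bdd hm (M := M) (fun x hx => by rw [abs_of_nonneg (h0 x hx)]; exact hM x hx) hr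
  have hi2 : Integrable (fun ζ => normKernel n p y (r • ζ) ^ q) (sphMeasure n) :=
    integrable_of_bdd (g := fun x => normKernel n p y x ^ q) (hm.pow_const q) (M := M ^ q)
      (fun x hx => by
        rw [abs_of_nonneg (Real.rpow_nonneg (h0 x hx) _)]
        exact Real.rpow_le_rpow (h0 x hx) (hM x hx) (by linarith)) hr
  have hi3 : Integrable (fun ζ => (ball e δ).indicator (fun _ => T) ζ) (sphMeasure n) :=
    (integrable_const _).indicator measurableSet_ball
  have hpt : ∀ᵐ ζ ∂(sphMeasure n), normKernel n p y (r • ζ) ≤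
      η / 3 + ((ball e δ).indicator (fun _ => T) ζ
        + T ^ (-(q - 1)) * normKernel n p y (r • ζ) ^ q) := by
    filter_upwards [sphMeasure_ae n] with ζ hζ
    have hk0 := h0 _ (norm_smul_lt_one hζ hr)
    have hlast : 0 ≤ T ^ (-(q - 1)) * normKernel n p y (r • ζ) ^ q := by positivity
    by_cases hζe : ζ ∈ ball e δ
    · rw [indicator_of_mem hζe]
      rcases le_total (normKernel n p y (r • ζ)) T with h | h
      · linarith
      · have hkpos : 0 < normKernel n p y (r • ζ) := hT0.trans_le h
        have h1 : T ^ (q - 1) ≤ normKernel n p y (r • ζ) ^ (q - 1) :=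
          Real.rpow_le_rpow hT0.le h (by linarith)
        have h2 : normKernel n p y (r • ζ) ^ q =
            normKernel n p y (r • ζ) ^ (q - 1) * normKernel n p y (r • ζ) := by
          rw [← Real.rpow_add_one hkpos.ne']; congr 1; ring
        have h3 : normKernel n p y (r • ζ) ≤ T ^ (-(q - 1)) * normKernel n p y (r • ζ) ^ q := by
          rw [h2, Real.rpow_neg hT0.le, ← mul_assoc]
          refine le_mul_of_one_le_left hk0 ?_
          rw [inv_mul_eq_div]
          exact (one_le_div (Real.rpow_pos_of_pos hT0 _)).2 h1
        linarith
    · rw [indicator_of_notMem hζe]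
      have h1 : normKernel n p y (r • ζ) ≤ c / A :=
        div_le_div_of_nonneg_right (extPoisson_off_cap hy0 hy2 hζ hr hδ hζe) hN.le
      linarith
  refine (integral_mono_ae hi1 ((integrable_const _).add (hi3.add (hi2.const_mul _))) hpt).trans ?_
  rw [integral_add' (integrable_const _) (hi3.add (hi2.const_mul _)),
    integral_add' hi3 (hi2.const_mul _), integral_const_mul, integral_const,
    integral_indicator_const _ measurableSet_ball]
  have h4 : (sphMeasure n).real (ball e δ) * T ≤ η / 3 :=
    (le_div_iff₀ hT0).1 (hcap e (norm_inv_smul_self hy0))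
  have h5 : T ^ (-(q - 1)) * ∫ ζ, normKernel n p y (r • ζ) ^ q ∂(sphMeasure n) ≤ η / 3 * 1 :=
    mul_le_mul hT1 (hint r hr) (integral_nonneg_of_ae (by
      filter_upwards [sphMeasure_ae n] with ζ hζ
      exact Real.rpow_nonneg (h0 _ (norm_smul_lt_one hζ hr)) _)) hη3.le
  simp only [probReal_univ, smul_eq_mul, one_mul]
  linarith

/-! ### Linear structure of `h^p` and gliding sums -/

lemma HarmOn.add {n : ℕ} {f g : Eucl n → ℂ} (hf : HarmOn f (uBall n)) (hg : HarmOn g (uBall n)) :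
    HarmOn (f + g) (uBall n) := by
  refine ⟨hf.1.add hg.1, fun x hx => ?_⟩
  have hnx : uBall n ∈ 𝓝 x := isOpen_ball.mem_nhds hx
  have h : lap (f + g) x = lap f x + lap g x := by
    simp only [lap, ← Finset.sum_add_distrib]
    rw [iteratedFDeriv_add_apply (hf.1.contDiffAt hnx) (hg.1.contDiffAt hnx)]
    simp
  rw [h, hf.2 x hx, hg.2 x hx, add_zero]

lemma HarmOn.smul {n : ℕ} {f : Eucl n → ℂ} (hf : HarmOn f (uBall n)) (c : ℂ) :
    HarmOn (c • f) (uBall n) := by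
  refine ⟨contDiffOn_const.smul hf.1, fun x hx => ?_⟩
  have hnx : uBall n ∈ 𝓝 x := isOpen_ball.mem_nhds hx
  have h : lap (c • f) x = c • lap f x := by
    simp only [lap, Finset.smul_sum]
    rw [iteratedFDeriv_const_smul_apply (hf.1.contDiffAt hnx)]
    simp
  rw [h, hf.2 x hx, smul_zero]

lemma harmOn_zero (n : ℕ) : HarmOn (0 : Eucl n → ℂ) (uBall n) := by
  refine ⟨contDiffOn_const, fun x _ => ?_⟩
  have h : (0 : Eucl n → ℂ) = fun _ => 0 := rfl
  simp [lap, h]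

lemma memHp_of_bdd {n : ℕ} [IsProbabilityMeasure (sphMeasure n)] {p : ℝ≥0∞} (hp1 : 1 < p)
    (hp2 : p ≠ ⊤) {f : Eucl n → ℂ} (hf : HarmOn f (uBall n)) {M : ℝ}
    (hM : ∀ x, ‖x‖ < 1 → ‖f x‖ ≤ M) : MemHp n p f := by
  refine ⟨hf, ?_⟩
  rw [if_neg hp2]
  exact hpNormSet_bddAbove hM (ENNReal.toReal_pos (zero_lt_one.trans hp1).ne' hp2)

/-- An `ℓ^p`-type inequality: against a bounded number `a`, the cross term in `(a + b)^q` is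
controlled by `b^q` and a multiple of `b`. -/
lemma add_rpow_le_of_bdd {a b M q : ℝ} (hq : 1 ≤ q) (ha : 0 ≤ a) (haM : a ≤ M) (hb : 0 ≤ b) :
    (a + b) ^ q ≤ a ^ q + 2 ^ q * b ^ q + q * (2 * M) ^ (q - 1) * b := by
  have hM : 0 ≤ M := ha.trans haM
  rcases le_total M b with h | h
  · have h1 : (a + b) ^ q ≤ (2 * b) ^ q := Real.rpow_le_rpow (by linarith) (by linarith)
      (by linarith)
    rw [Real.mul_rpow (by norm_num) hb] at h1
    have h2 : 0 ≤ a ^ q := by positivity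
    have h3 : 0 ≤ q * (2 * M) ^ (q - 1) * b := by positivity
    linarith
  · have h2 : 0 ≤ 2 ^ q * b ^ q := by positivity
    rcases hb.eq_or_lt with rfl | hb'
    · simp only [add_zero, mul_zero]
      linarith
    have hX : 0 < a + b := by linarith
    -- Bernoulli's inequality for `a / (a + b) = 1 + s`
    have hB := one_add_mul_self_le_rpow_one_add (s := a / (a + b) - 1)
      (by have : 0 ≤ a / (a + b) := by positivity
          linarith) hq
    rw [add_sub_cancel, Real.div_rpow ha hX.le, le_div_iff₀ (Real.rpow_pos_of_pos hX _)] at hB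
    have h4 : (a + b) ^ q = (a + b) ^ (q - 1) * (a + b) := by
      rw [← Real.rpow_add_one hX.ne']; congr 1; ring
    have h5 : (1 + q * (a / (a + b) - 1)) * (a + b) ^ q =
        (a + b) ^ q - q * (a + b) ^ (q - 1) * b := by
      rw [h4]; field_simp; ring
    have h6 : (a + b) ^ (q - 1) ≤ (2 * M) ^ (q - 1) :=
      Real.rpow_le_rpow hX.le (by linarith) (by linarith)
    have h7 : q * (a + b) ^ (q - 1) * b ≤ q * (2 * M) ^ (q - 1) * b := by gcongr
    linarith

/-- If `|Λ(k_y)| ≥ ε` for `y` arbitrarily close to the sphere, then unimodular combinations of `N`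
successively chosen kernels have `Re Λ ≥ N ε`, while their `h^p` norms only grow like
`N^{1/p}`. The function `G` is the majorant obtained by summing the kernels without phases. -/
lemma exists_gliding_sum {n : ℕ} (hn : 2 ≤ n) [IsProbabilityMeasure (sphMeasure n)]
    {p : ℝ≥0∞} (hp1 : 1 < p) (hp2 : p ≠ ⊤) {Λ : (Eucl n → ℂ) → ℂ}
    (hadd : ∀ f g, MemHp n p f → MemHp n p g → Λ (f + g) = Λ f + Λ g)
    (hsmul : ∀ (c : ℂ) (f), MemHp n p f → Λ (c • f) = c • Λ f) {ε : ℝ} (hε : 0 < ε)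
    (hbad : ∀ ρ : ℝ, ρ < 1 → ∃ y : Eucl n, ρ < ‖y‖ ∧ ‖y‖ < 1 ∧
      ε ≤ ‖Λ (fun x => ((normKernel n p y x : ℝ) : ℂ))‖) (N : ℕ) :
    ∃ (F : Eucl n → ℂ) (G : Eucl n → ℝ) (M : ℝ), HarmOn F (uBall n) ∧ Measurable G ∧
      (∀ x, ‖x‖ < 1 → ‖F x‖ ≤ G x) ∧ (∀ x, ‖x‖ < 1 → G x ≤ M) ∧
      (∀ r ∈ Ico (0 : ℝ) 1, ∫ ζ, G (r • ζ) ^ p.toReal ∂(sphMeasure n) ≤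
        N * (2 ^ p.toReal + 1)) ∧ N * ε ≤ (Λ F).re := by
  set q := p.toReal with hqdef
  have hq1 : 1 < q := by
    rw [hqdef, ← ENNReal.toReal_one]; exact (ENNReal.toReal_lt_toReal (by simp) hp2).2 hp1
  induction N with
  | zero =>
    refine ⟨0, fun _ => 0, 0, harmOn_zero n, measurable_const, by simp, by simp, ?_, ?_⟩
    · intro r _
      simp [Real.zero_rpow (by linarith : q ≠ 0)]
    · have h0 : MemHp n p (0 : Eucl n → ℂ) :=
        memHp_of_bdd hp1 hp2 (harmOn_zero n) (M := 0) (by simp)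
      have := hsmul 0 0 h0
      simp only [zero_smul] at this
      simp [this]
  | succ N ih =>
    obtain ⟨F, G, M, hF, hGm, hFG, hGM, hGi, hΛ⟩ := ih
    have hM0 : 0 ≤ M := (norm_nonneg _).trans ((hFG 0 (by simp)).trans (hGM 0 (by simp)))
    set K : ℝ := q * (2 * M) ^ (q - 1) with hK
    have hK0 : 0 ≤ K := by positivity
    obtain ⟨ρ, hρ0, hρ1, hρ⟩ := normKernel_integral_small hn hp1 hp2
      (show (0 : ℝ) < 1 / (K + 1) by positivity)
    obtain ⟨y, hy1, hy2, hyε⟩ := hbad ρ hρ1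
    obtain ⟨hN, hsmall⟩ := hρ y hy1 hy2
    obtain ⟨hm, h0, ⟨M', hM'⟩, hint⟩ := normKernel_props hp1 hp2 hy2 hN
    set k : Eucl n → ℝ := normKernel n p y with hk
    have hkH : HarmOn (fun x => ((k x : ℝ) : ℂ)) (uBall n) := extPoisson_harmOn hy2 _
    have hknorm : ∀ x, ‖x‖ < 1 → ‖((k x : ℝ) : ℂ)‖ = k x := fun x hx => by
      rw [Complex.norm_real, Real.norm_eq_abs, abs_of_nonneg (h0 x hx)]
    have hkMem : MemHp n p (fun x => ((k x : ℝ) : ℂ)) :=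
      memHp_of_bdd hp1 hp2 hkH (M := M') fun x hx => (hknorm x hx).trans_le (hM' x hx)
    set L := Λ (fun x => ((k x : ℝ) : ℂ)) with hL
    have hLpos : 0 < ‖L‖ := hε.trans_le hyε
    -- the phase making `c * L` equal to `‖L‖`
    set c : ℂ := (starRingEnd ℂ) L / ‖L‖ with hc
    have hcn : ‖c‖ = 1 := by
      rw [hc, norm_div, RCLike.norm_conj, Complex.norm_real, norm_norm, div_self hLpos.ne']
    have hcL : c * L = (‖L‖ : ℂ) := by
      have : (‖L‖ : ℂ) ≠ 0 := by exact_mod_cast hLpos.ne'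
      rw [hc, div_mul_eq_mul_div, Complex.conj_mul', sq, mul_div_assoc, div_self this, mul_one]
    have hckMem : MemHp n p (c • fun x => ((k x : ℝ) : ℂ)) :=
      memHp_of_bdd hp1 hp2 (hkH.smul c) (M := M') fun x hx => by
        rw [Pi.smul_apply, norm_smul, hcn, one_mul, hknorm x hx]; exact hM' x hx
    have hFMem : MemHp n p F := memHp_of_bdd hp1 hp2 hF fun x hx => (hFG x hx).trans (hGM x hx)
    refine ⟨F + c • (fun x => ((k x : ℝ) : ℂ)), fun x => G x + k x, M + M', hF.add (hkH.smul c),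
      hGm.add hm, fun x hx => ?_, fun x hx => add_le_add (hGM x hx) (hM' x hx), ?_, ?_⟩
    · rw [Pi.add_apply, Pi.smul_apply]
      refine (norm_add_le _ _).trans (add_le_add (hFG x hx) ?_)
      rw [norm_smul, hcn, one_mul, hknorm x hx]
    · intro r hr
      have hG0 : ∀ x, ‖x‖ < 1 → 0 ≤ G x := fun x hx => (norm_nonneg _).trans (hFG x hx)
      have hi1 : Integrable (fun ζ => k (r • ζ)) (sphMeasure n) :=
        integrable_of_bdd hm (M := M')
          (fun x hx => by rw [abs_of_nonneg (h0 x hx)]; exact hM' x hx) hr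
      have hpow : ∀ (g : Eucl n → ℝ) (A : ℝ), Measurable g → (∀ x, ‖x‖ < 1 → 0 ≤ g x) →
          (∀ x, ‖x‖ < 1 → g x ≤ A) →
          Integrable (fun ζ => g (r • ζ) ^ q) (sphMeasure n) := fun g A hg hg0 hgA =>
        integrable_of_bdd (g := fun x => g x ^ q) (hg.pow_const q) (M := A ^ q)
          (fun x hx => by
            rw [abs_of_nonneg (Real.rpow_nonneg (hg0 x hx) _)]
            exact Real.rpow_le_rpow (hg0 x hx) (hgA x hx) (by linarith)) hr
      have hi2 := hpow k M' hm h0 hM'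
      have hi3 := hpow G M hGm hG0 hGM
      have hi4 := hpow (fun x => G x + k x) (M + M') (hGm.add hm)
        (fun x hx => add_nonneg (hG0 x hx) (h0 x hx))
        (fun x hx => add_le_add (hGM x hx) (hM' x hx))
      have hpt : ∀ᵐ ζ ∂(sphMeasure n), (G (r • ζ) + k (r • ζ)) ^ q ≤
          G (r • ζ) ^ q + 2 ^ q * k (r • ζ) ^ q + K * k (r • ζ) := by
        filter_upwards [sphMeasure_ae n] with ζ hζ
        have hx := norm_smul_lt_one hζ hr
        exact add_rpow_le_of_bdd hq1.le (hG0 _ hx) (hGM _ hx) (h0 _ hx)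
      refine (integral_mono_ae hi4 ((hi3.add (hi2.const_mul _)).add (hi1.const_mul _))
        hpt).trans ?_
      rw [integral_add' (hi3.add (hi2.const_mul _)) (hi1.const_mul _),
        integral_add' hi3 (hi2.const_mul _), integral_const_mul, integral_const_mul]
      have h1 := hGi r hr
      have h2 : (2 : ℝ) ^ q * ∫ ζ, k (r • ζ) ^ q ∂(sphMeasure n) ≤ 2 ^ q * 1 :=
        mul_le_mul_of_nonneg_left (hint r hr) (by positivity)
      have h3 : K * ∫ ζ, k (r • ζ) ∂(sphMeasure n) ≤ K * (1 / (K + 1)) :=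
        mul_le_mul_of_nonneg_left (hsmall r hr) hK0
      have h4 : K * (1 / (K + 1)) ≤ 1 := by
        rw [mul_one_div]; exact (div_le_one (by positivity)).2 (by linarith)
      push_cast
      linarith
    · rw [hadd F _ hFMem hckMem, hsmul c _ hkMem, smul_eq_mul, ← hL, hcL, Complex.add_re,
        Complex.ofReal_re]
      push_cast
      linarith

/-- A sequence growing linearly is not bounded by a constant times its `1/q`-th power. -/
lemma exists_nat_rpow_lt {q ε : ℝ} (hq : 1 < q) (hε : 0 < ε) (C A : ℝ) (hA : 0 ≤ A) :
    ∃ N : ℕ, C * ((N : ℝ) * A) ^ (1 / q) < N * ε := by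
  have hq0 : 0 < q := by linarith
  have hexp : 0 < 1 - 1 / q := by
    have : 1 / q < 1 := (div_lt_one hq0).2 hq
    linarith
  have ht := (((tendsto_rpow_atTop hexp).comp
    tendsto_natCast_atTop_atTop).atTop_mul_const hε).eventually_gt_atTop (C * A ^ (1 / q))
  obtain ⟨N, hN, hN0⟩ := (ht.and (eventually_gt_atTop 0)).exists
  refine ⟨N, ?_⟩
  have hN' : (0 : ℝ) < N := by exact_mod_cast hN0
  simp only [Function.comp] at hN
  have h1 : (N : ℝ) = (N : ℝ) ^ (1 - 1 / q) * (N : ℝ) ^ (1 / q) := by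
    rw [← Real.rpow_add hN', sub_add_cancel, Real.rpow_one]
  rw [Real.mul_rpow hN'.le hA]
  calc C * ((N : ℝ) ^ (1 / q) * A ^ (1 / q)) = (C * A ^ (1 / q)) * (N : ℝ) ^ (1 / q) := by ring
    _ < ((N : ℝ) ^ (1 - 1 / q) * ε) * (N : ℝ) ^ (1 / q) :=
        mul_lt_mul_of_pos_right hN (Real.rpow_pos_of_pos hN' _)
    _ = ((N : ℝ) ^ (1 - 1 / q) * (N : ℝ) ^ (1 / q)) * ε := by ring
    _ = N * ε := by rw [← h1]

/-- Lemma 5.1: For `n ≥ 2` and `1 < p < ∞`, the normalized kernels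
`k_y^{(p)} = P_y/‖P_y‖_{h^p}` tend to `0` weakly in `h^p(B)` as `|y| → 1⁻`: for every
bounded linear functional `Λ` on `h^p(B)`, `Λ(k_y^{(p)}) → 0` as `|y| → 1⁻`. -/
theorem normalized_extPoisson_weak_null (n : ℕ) (hn : 2 ≤ n)
    (p : ℝ≥0∞) (hp1 : 1 < p) (hp2 : p ≠ ⊤)
    (Λ : (Eucl n → ℂ) → ℂ)
    (hadd : ∀ f g, MemHp n p f → MemHp n p g → Λ (f + g) = Λ f + Λ g)
    (hsmul : ∀ (c : ℂ) (f), MemHp n p f → Λ (c • f) = c • Λ f)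
    (hbdd : ∃ C : ℝ, ∀ f, MemHp n p f → ‖Λ f‖ ≤ C * hpNorm n p f) :
    Filter.Tendsto
      (fun y : Eucl n => Λ (fun x =>
        (↑(extPoisson n y x /
            hpNorm n p (fun z => (↑(extPoisson n y z) : ℂ))) : ℂ)))
      (Filter.comap (fun y : Eucl n => ‖y‖) (nhdsWithin 1 (Set.Iio 1)))
      (nhds 0) := by
  have hq : 0 < p.toReal := ENNReal.toReal_pos (zero_lt_one.trans hp1).ne' hp2
  have hq1 : 1 < p.toReal := by
    rw [← ENNReal.toReal_one]; exact (ENNReal.toReal_lt_toReal (by simp) hp2).2 hp1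
  obtain ⟨C, hC⟩ := hbdd
  rcases sphMeasure_dichotomy n with hσ | hσ
  · -- If `σ` were zero, all norms and all normalized kernels would vanish identically.
    have hset : ∀ f, hpNormSet n p.toReal f ⊆ {0} := by
      rintro f _ ⟨r, _, rfl⟩
      simp only [hσ, integral_zero_measure, mem_singleton_iff]
      exact Real.zero_rpow (by positivity)
    have hnorm : ∀ f, hpNorm n p f = 0 := by
      intro f
      rw [hpNorm, if_neg hp2]
      have h1 : hpNormSet n p.toReal f = {0} :=
        Subset.antisymm (hset f) (singleton_subset_iff.2
          ⟨0, by simp, by simp [hσ, hq.ne']⟩)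
      rw [h1, csSup_singleton]
    have h0 : MemHp n p (fun _ : Eucl n => (0 : ℂ)) := by
      refine ⟨harmOn_zero n, ?_⟩
      rw [if_neg hp2]
      exact (bddAbove_singleton (a := (0 : ℝ))).mono (hset _)
    have hΛ0 : Λ (fun _ => 0) = 0 := by
      have := hC _ h0
      rw [hnorm, mul_zero] at this
      exact norm_le_zero_iff.1 this
    simp only [hnorm, div_zero, Complex.ofReal_zero, hΛ0]
    exact tendsto_const_nhds
  · change Tendsto (fun y : Eucl n => Λ (fun x => ((normKernel n p y x : ℝ) : ℂ))) _ _
    by_contra hcon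
    rw [Metric.tendsto_nhds] at hcon
    push Not at hcon
    obtain ⟨ε, hε, hfreq⟩ := hcon
    have hbad : ∀ ρ : ℝ, ρ < 1 → ∃ y : Eucl n, ρ < ‖y‖ ∧ ‖y‖ < 1 ∧
        ε ≤ ‖Λ (fun x => ((normKernel n p y x : ℝ) : ℂ))‖ := by
      intro ρ hρ
      have hev : ∀ᶠ y : Eucl n in comap (fun y : Eucl n => ‖y‖) (𝓝[<] 1),
          ‖y‖ ∈ Ioo ρ 1 := tendsto_comap.eventually (Ioo_mem_nhdsLT hρ)
      obtain ⟨y, hy1, hy2⟩ := (hfreq.and_eventually hev).exists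
      exact ⟨y, hy2.1, hy2.2, by simpa using hy1⟩
    obtain ⟨N, hN⟩ := exists_nat_rpow_lt hq1 hε |C| (2 ^ p.toReal + 1) (by positivity)
    obtain ⟨F, G, M, hF, hGm, hFG, hGM, hGi, hΛ⟩ :=
      exists_gliding_sum hn hp1 hp2 hadd hsmul hε hbad N
    have hFM : ∀ x, ‖x‖ < 1 → ‖F x‖ ≤ M := fun x hx => (hFG x hx).trans (hGM x hx)
    have h1 := hC F (memHp_of_bdd hp1 hp2 hF hFM)
    have h2 : hpNorm n p F ≤ ((N : ℝ) * (2 ^ p.toReal + 1)) ^ (1 / p.toReal) :=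
      hpNorm_le hp2 fun r hr => (integral_norm_rpow_le hGm hGM hFG hq hr).trans (hGi r hr)
    have h3 : 0 ≤ hpNorm n p F :=
      (integral_le_hpNorm_rpow hp1 hp2 hFM (r := 0) (by simp)).1
    have h4 : C * hpNorm n p F ≤ |C| * ((N : ℝ) * (2 ^ p.toReal + 1)) ^ (1 / p.toReal) :=
      mul_le_mul (le_abs_self C) h2 h3 (abs_nonneg C)
    have h5 := Complex.re_le_norm (Λ F)
    linarith
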